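/- Let μ ∈ {0,1}, m ≥ 1, n = 2m + μ, let k ≥ 0 be an integer and s > 0. For an integer j, define A_j = ∫_{ℝ^n} 1[ #{i : |x_i| < s} = j ] · ∏_{i=1}^{n} e^{−x_i²/2} · ∏_{1≤i<l≤n} |x_l − x_i| dx and Z₁ = ∫_{ℝ^n} ∏_{i=1}^{n} e^{−x_i²/2} · ∏_{1≤i<l≤n} |x_l − x_i| dx, with the convention A_j = 0 for j < 0. Further define B_k = ∫_{(0,∞)^m} 1[ #{i : y_i < s²} = k ] · ∏_{i=1}^{m} y_i^{μ−1/2} e^{−y_i} · ∏_{1≤i<l≤m} (y_l − y_i)² dy and Z₂ = ∫_{(0,∞)^m} ∏_{i=1}^{m} y_i^{μ−1/2} e^{−y_i} · ∏_{1≤i<l≤m} (y_l − y_i)² dy. Then all these integrals are finite, Z₁ > 0, Z₂ > 0, and (A_{2k+μ−1} + A_{2k+μ}) / Z₁ = B_k / Z₂. -/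

import Mathlib

open MeasureTheory

/-- The integrand of the GOE gap-counting integral `A_j`: the indicator that exactly `j`
of the `|x_i|` are `< s`, times `∏ e^{-x_i²/2} ∏_{i<l} |x_l - x_i|`. -/
noncomputable def goeGapIntegrand (n : ℕ) (s : ℝ) (j : ℤ) (x : Fin n → ℝ) : ℝ :=
  if ((Finset.univ.filter fun i => |x i| < s).card : ℤ) = j then
    (∏ i, Real.exp (-(x i) ^ 2 / 2)) * ∏ k, ∏ l ∈ Finset.Iio k, |x k - x l|
  else 0

/-- The integrand of the GOE normalization `Z₁`. -/
noncomputable def goeTotalIntegrand (n : ℕ) (x : Fin n → ℝ) : ℝ :=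
  (∏ i, Real.exp (-(x i) ^ 2 / 2)) * ∏ k, ∏ l ∈ Finset.Iio k, |x k - x l|

/-- The integrand of the LUE (parameter `μ - 1/2`) gap-counting integral `B_k`. -/
noncomputable def lueGapIntegrand (m μ : ℕ) (c : ℝ) (k : ℕ) (y : Fin m → ℝ) : ℝ :=
  if (Finset.univ.filter fun i => y i < c).card = k then
    (∏ i, (y i) ^ ((μ : ℝ) - 1 / 2) * Real.exp (-(y i))) *
      ∏ i, ∏ l ∈ Finset.Iio i, (y i - y l) ^ 2
  else 0

/-- The integrand of the LUE normalization `Z₂`. -/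
noncomputable def lueTotalIntegrand (m μ : ℕ) (y : Fin m → ℝ) : ℝ :=
  (∏ i, (y i) ^ ((μ : ℝ) - 1 / 2) * Real.exp (-(y i))) *
    ∏ i, ∏ l ∈ Finset.Iio i, (y i - y l) ^ 2

/-!
Up to null sets, sign changes and permutations of the coordinates carry the chamber
`0 < x₀ < x₁ < ⋯` onto all of `ℝⁿ`. Over the chamber, the sum of `|Δ(ε • x)|` over all signs `ε` is
again a determinant: averaging the rows of the Vandermonde matrix over the signs erases the entries
of odd index sum. The resulting checkerboard matrix splits into two blocks, one involving the points
`xᵢ` in every second position (the kept ones, starting from the second smallest when `μ = 1` and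
from the smallest when `μ = 0`), the other one the dropped points, which interlace with them.

Integrating out the dropped points row by row gives Gaussian integrals over adjacent intervals. Row
operations turn these into tail integrals, and the recurrence of the Gaussian moments, used in
column operations, turns the tails into the boundary terms `a ^ (2 k + μ) * exp (-a ^ 2 / 2)`: up to
a constant the integral is the block of the kept points once more. Hence the kept points have a
density that is a perfect square, and `y = a ^ 2` transforms it into the LUE density. Since the kept
points occupy alternate positions, `k` of them are below `s` exactly when `2 k + μ - 1` or
`2 k + μ` of all the points are.
-/

section Symmetrization

open Function
open scoped Pointwise

theorem ae_injective {ι : Type*} [Fintype ι] : ∀ᵐ x : ι → ℝ, Injective x := by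
  have ae_ne (i j : ι) (hij : i ≠ j) : ∀ᵐ x : ι → ℝ, x i ≠ x j := by
    have hker : LinearMap.ker (.proj i - .proj j : (ι → ℝ) →ₗ[ℝ] ℝ) ≠ ⊤ := by
      classical
      intro h
      simpa [hij.symm] using DFunLike.congr_fun (LinearMap.ker_eq_top.mp h) (Pi.single i 1)
    filter_upwards [measure_eq_zero_iff_ae_notMem.mp (Measure.addHaar_submodule volume _ hker)]
      with x hx
    simpa [sub_eq_zero] using hx
  simp only [← ae_all_iff] at ae_ne
  filter_upwards [ae_ne] with x hx i j hij
  exact not_imp_not.mp (hx i j) hij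

open Equiv (Perm)

instance measurableConstSMul_perm {ι α : Type*} [MeasurableSpace α] :
    MeasurableConstSMul (Perm ι)ᵈᵐᵃ (ι → α) where
  measurable_const_smul _ := measurable_pi_lambda _ fun _ => measurable_pi_apply _

instance smulInvariantMeasure_perm {ι α : Type*} [Fintype ι] [MeasureSpace α]
    [SigmaFinite (volume : Measure α)] :
    SMulInvariantMeasure (Perm ι)ᵈᵐᵃ (ι → α) volume where
  measure_preimage_smul σ _ hs :=
    (volume_preserving_arrowCongr' (DomMulAct.mk.symm σ).symm (.refl α)
      (.id volume)).measure_preimage hs.nullMeasurableSet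

theorem measurableSet_ofPred_strictMono {n : ℕ} :
    MeasurableSet {x : Fin n → ℝ | StrictMono x} := by
  simp only [StrictMono, Set.ofPred_forall]
  exact .iInter fun i => .iInter fun j => .iInter fun _ =>
    measurableSet_lt (measurable_pi_apply i) (measurable_pi_apply j)

theorem isFundamentalDomain_strictMono (n : ℕ) :
    IsFundamentalDomain (Perm (Fin n))ᵈᵐᵃ {x : Fin n → ℝ | StrictMono x} := by
  refine .mk'' measurableSet_ofPred_strictMono.nullMeasurableSet ?_ (fun σ hσ => ?_)
    fun σ => (measurePreserving_smul σ volume).quasiMeasurePreserving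
  · filter_upwards [ae_injective] with x hx
    exact ⟨.mk (Tuple.sort x), (Tuple.monotone_sort x).strictMono_of_injective
      (hx.comp (Tuple.sort x).injective)⟩
  · refine Disjoint.aedisjoint (Set.disjoint_left.mpr ?_)
    rintro _ ⟨x, hx, rfl⟩ hσx
    refine hσ (DomMulAct.mk.symm.injective (Equiv.ext fun i => hx.injective ?_))
    exact congrFun (Tuple.unique_monotone (σ := DomMulAct.mk.symm σ) (τ := 1) hσx.monotone
      hx.monotone) i

variable {E : Type*} [NormedAddCommGroup E]

theorem setIntegral_eq_factorial_smul_setIntegral_strictMono [NormedSpace ℝ E] {n : ℕ}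
    {S : Set (Fin n → ℝ)} {f : (Fin n → ℝ) → E} (hS : ∀ (σ : Perm (Fin n)) x, x ∘ σ ∈ S ↔ x ∈ S)
    (hf : ∀ (σ : Perm (Fin n)) x, f (x ∘ σ) = f x) (hfS : IntegrableOn f S) :
    ∫ x in S, f x = n.factorial • ∫ x in S ∩ {x | StrictMono x}, f x := by
  have smul_S (σ : (Perm (Fin n))ᵈᵐᵃ) : σ • S = S := by
    ext x
    rw [Set.mem_smul_set_iff_inv_smul_mem]
    exact hS _ x
  have f_smul (σ : (Perm (Fin n))ᵈᵐᵃ) (x : Fin n → ℝ) : f (σ • x) = f x := hf _ x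
  have : Finite (Perm (Fin n))ᵈᵐᵃ := .of_equiv _ DomMulAct.mk
  rw [(isFundamentalDomain_strictMono n).setIntegral_eq_tsum' hfS]
  simp only [smul_S, f_smul, tsum_const]
  rw [Nat.card_congr DomMulAct.mk.symm, Nat.card_perm, Nat.card_fin]

theorem units_smul_apply {ι R : Type*} [Ring R] (ε : ι → ℤˣ) (x : ι → R) (i : ι) :
    (ε • x) i = (ε i : ℤ) * x i := by
  rw [Pi.smul_apply', Units.smul_def, zsmul_eq_mul]

theorem abs_units_smul {ι G : Type*} [AddCommGroup G] [LinearOrder G] (ε : ι → ℤˣ)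
    (x : ι → G) : |ε • x| = |x| := by
  ext i
  rcases Int.units_eq_one_or (ε i) with h | h <;> simp [h]

instance measurableConstSMul_units {ι : Type*} : MeasurableConstSMul (ι → ℤˣ) (ι → ℝ) where
  measurable_const_smul ε := by
    refine measurable_pi_lambda _ fun i => ?_
    simp only [units_smul_apply]
    fun_prop

instance smulInvariantMeasure_units {ι : Type*} [Fintype ι] :
    SMulInvariantMeasure (ι → ℤˣ) (ι → ℝ) volume where
  measure_preimage_smul ε _ hs := by
    refine (volume_preserving_pi (f := fun i t => ε i • t) fun i => ?_).measure_preimage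
      hs.nullMeasurableSet
    rcases Int.units_eq_one_or (ε i) with h | h
    · simpa [h] using! MeasurePreserving.id (volume : Measure ℝ)
    · simpa [h, Units.smul_def] using Measure.measurePreserving_neg (volume : Measure ℝ)

theorem measurableSet_ofPred_forall_pos {ι : Type*} [Countable ι] :
    MeasurableSet {x : ι → ℝ | ∀ i, 0 < x i} := by
  simp only [Set.ofPred_forall]
  exact .iInter fun i => measurableSet_lt measurable_const (measurable_pi_apply i)

theorem isFundamentalDomain_forall_pos (ι : Type*) [Fintype ι] :
    IsFundamentalDomain (ι → ℤˣ) {x : ι → ℝ | ∀ i, 0 < x i} := by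
  refine .mk'' measurableSet_ofPred_forall_pos.nullMeasurableSet ?_ (fun ε hε => ?_)
    fun ε => (measurePreserving_smul ε volume).quasiMeasurePreserving
  · filter_upwards [ae_all_iff.mpr fun i => Measure.ae_eval_ne (fun _ : ι => volume) i (0 : ℝ)]
      with x hx
    refine ⟨fun i => if 0 < x i then 1 else -1, fun i => ?_⟩
    rcases (hx i).lt_or_gt with h | h <;> simp [h, h.not_gt]
  · refine Disjoint.aedisjoint (Set.disjoint_left.mpr ?_)
    rintro _ ⟨x, hx, rfl⟩ hεx
    refine hε (funext fun i => (Int.units_eq_one_or (ε i)).resolve_right fun h => ?_)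
    have := hεx i
    simp only [units_smul_apply, h, Units.val_neg, Units.val_one, Int.cast_neg,
      Int.cast_one] at this
    linarith [hx i]

theorem integrable_sum_units_smul {ι : Type*} [Fintype ι] [DecidableEq ι] {f : (ι → ℝ) → E}
    (hf : Integrable f) : Integrable fun x => ∑ ε : ι → ℤˣ, f (ε • x) :=
  integrable_finsetSum _ fun ε _ =>
    (measurePreserving_smul ε volume).integrable_comp_of_integrable hf

theorem setIntegral_eq_setIntegral_pos_sum_units_smul [NormedSpace ℝ E] {ι : Type*} [Fintype ι]
    [DecidableEq ι] {S : Set (ι → ℝ)} {f : (ι → ℝ) → E} (hS : ∀ (ε : ι → ℤˣ) x, ε • x ∈ S ↔ x ∈ S)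
    (hf : Integrable f) :
    ∫ x in S, f x = ∫ x in S ∩ {x | ∀ i, 0 < x i}, ∑ ε : ι → ℤˣ, f (ε • x) := by
  have smul_S (ε : ι → ℤˣ) : ε • S = S := by
    ext x
    rw [Set.mem_smul_set_iff_inv_smul_mem, hS]
  have f_smul (ε : ι → ℤˣ) : Integrable (fun x => f (ε • x)) :=
    (measurePreserving_smul ε volume).integrable_comp_of_integrable hf
  rw [(isFundamentalDomain_forall_pos ι).setIntegral_eq_tsum' hf.integrableOn, tsum_fintype,
    integral_finsetSum _ fun ε _ => (f_smul ε).integrableOn]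
  simp only [smul_S]
  exact Equiv.sum_comp (.inv _) fun ε => ∫ x in S ∩ {x | ∀ i, 0 < x i}, f (ε • x)

theorem sum_units_smul_comp_perm {ι R M : Type*} [Fintype ι] [DecidableEq ι] [AddCommGroup R]
    [AddCommMonoid M] {f : (ι → R) → M} (hf : ∀ (σ : Perm ι) x, f (x ∘ σ) = f x) (σ : Perm ι)
    (x : ι → R) :
    ∑ ε : ι → ℤˣ, f (ε • (x ∘ σ)) = ∑ ε : ι → ℤˣ, f (ε • x) := by
  rw [← (σ.symm.arrowCongr (.refl ℤˣ)).sum_comp]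
  exact Finset.sum_congr rfl fun ε _ => hf σ (ε • x)

/-- The open Weyl chamber of type `B`: a fundamental domain for coordinate permutations and sign
changes. -/
def chamber (n : ℕ) : Set (Fin n → ℝ) := {x | (∀ i, 0 < x i) ∧ StrictMono x}

theorem measurableSet_chamber {n : ℕ} : MeasurableSet (chamber n) :=
  measurableSet_ofPred_forall_pos.inter measurableSet_ofPred_strictMono

theorem setIntegral_eq_factorial_smul_setIntegral_chamber [NormedSpace ℝ E] {n : ℕ}
    {S : Set (Fin n → ℝ)} {f : (Fin n → ℝ) → E}
    (hSsign : ∀ (ε : Fin n → ℤˣ) x, ε • x ∈ S ↔ x ∈ S)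
    (hSperm : ∀ (σ : Perm (Fin n)) x, x ∘ σ ∈ S ↔ x ∈ S)
    (hf : ∀ (σ : Perm (Fin n)) x, f (x ∘ σ) = f x) (hfint : Integrable f) :
    ∫ x in S, f x = n.factorial • ∫ x in chamber n ∩ S, ∑ ε : Fin n → ℤˣ, f (ε • x) := by
  rw [setIntegral_eq_setIntegral_pos_sum_units_smul hSsign hfint,
    setIntegral_eq_factorial_smul_setIntegral_strictMono (fun σ x => ?_)
      (sum_units_smul_comp_perm hf) (integrable_sum_units_smul hfint).integrableOn,
    Set.inter_assoc, Set.inter_comm]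
  · rfl
  · exact and_congr (hSperm σ x) (σ.forall_congr_right (q := fun i => 0 < _))

end Symmetrization

section Determinants

open Matrix

theorem det_eq_sum_sign_mul_prod {n R : Type*} [Fintype n] [DecidableEq n] [CommRing R]
    (M : Matrix n n R) : M.det = ∑ σ : Equiv.Perm n, (σ.sign : ℤ) * ∏ i, M i (σ i) := by
  rw [← det_transpose, det_apply']
  rfl

theorem prod_Iio_sub_eq_det_vandermonde {R : Type*} [CommRing R] {n : ℕ} (x : Fin n → R) :
    ∏ k, ∏ l ∈ Finset.Iio k, (x k - x l) = (vandermonde x).det := by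
  rw [det_vandermonde]
  exact Finset.prod_comm' (by simp)

theorem abs_det_vandermonde_comp_perm {R : Type*} [CommRing R] [LinearOrder R]
    [IsStrictOrderedRing R] {n : ℕ} (x : Fin n → R) (σ : Equiv.Perm (Fin n)) :
    |(vandermonde (x ∘ σ)).det| = |(vandermonde x).det| := by
  rw [show vandermonde (x ∘ σ) = (vandermonde x).submatrix σ id from rfl, det_permute, abs_mul,
    ← Int.cast_abs, Int.isUnit_iff_abs_eq.mp σ.sign.isUnit, Int.cast_one, one_mul]

theorem det_pow_two_mul_add {R : Type*} [CommRing R] {n : ℕ} (x : Fin n → R) (j : ℕ) :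
    (of fun i k : Fin n => x i ^ (2 * (k : ℕ) + j)).det =
      (∏ i, x i ^ j) * (vandermonde (x ^ 2)).det := by
  rw [← det_mul_column]
  congr 1
  ext i k
  simp [← pow_mul, pow_add, mul_comm]

/-- The Vandermonde matrix with the entries of odd index sum `i + k` replaced by zero. It is half
the sum of the rows `ε ^ i * (ε * x i) ^ k` over the signs `ε`. -/
def checkerboardVandermonde {R : Type*} [CommRing R] {n : ℕ} (x : Fin n → R) :
    Matrix (Fin n) (Fin n) R :=
  of fun i k => if Even ((i : ℕ) + k) then x i ^ (k : ℕ) else 0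

theorem abs_sub_units_smul {n : ℕ} {x : Fin n → ℝ} (hx : x ∈ chamber n) (ε : Fin n → ℤˣ)
    {k l : Fin n} (hlk : l < k) :
    |(ε • x) k - (ε • x) l| = (ε k : ℤ) * ((ε • x) k - (ε • x) l) := by
  have hpos := hx.1 l
  have hlt := hx.2 hlk
  rcases Int.units_eq_one_or (ε k) with hk | hk <;>
    rcases Int.units_eq_one_or (ε l) with hl | hl <;>
    simp only [units_smul_apply, hk, hl, Units.val_one, Units.val_neg, Int.cast_one, Int.cast_neg]
  · rw [abs_of_pos] <;> linarith
  · rw [abs_of_pos] <;> linarith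
  · rw [abs_of_neg] <;> linarith
  · rw [abs_of_neg] <;> linarith

theorem abs_det_vandermonde_units_smul {n : ℕ} {x : Fin n → ℝ} (hx : x ∈ chamber n)
    (ε : Fin n → ℤˣ) :
    |(vandermonde (ε • x)).det| =
      (of fun i k : Fin n => ((ε i : ℤ) : ℝ) ^ (i : ℕ) * ((ε i : ℤ) * x i) ^ (k : ℕ)).det := by
  calc |(vandermonde (ε • x)).det|
      = ∏ k, ∏ l ∈ Finset.Iio k, |(ε • x) k - (ε • x) l| := by
        simp only [← prod_Iio_sub_eq_det_vandermonde, Finset.abs_prod]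
    _ = ∏ k, ∏ l ∈ Finset.Iio k, ((ε k : ℤ) : ℝ) * ((ε • x) k - (ε • x) l) :=
        Finset.prod_congr rfl fun k _ => Finset.prod_congr rfl fun l hl =>
          abs_sub_units_smul hx ε (Finset.mem_Iio.mp hl)
    _ = (∏ k, ((ε k : ℤ) : ℝ) ^ (k : ℕ)) * (vandermonde (ε • x)).det := by
        simp only [Finset.prod_mul_distrib, Finset.prod_const, Fin.card_Iio,
          prod_Iio_sub_eq_det_vandermonde]
    _ = _ := by
        rw [← det_mul_column]
        simp only [vandermonde_apply, units_smul_apply]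

theorem sum_units_pow_mul_mul_pow {R : Type*} [CommRing R] (t : R) (i k : ℕ) :
    ∑ ε : ℤˣ, ((ε : ℤ) : R) ^ i * ((ε : ℤ) * t) ^ k = 2 * if Even (i + k) then t ^ k else 0 := by
  rw [show (Finset.univ : Finset ℤˣ) = {1, -1} by decide, Finset.sum_pair (by decide)]
  have h : (-1 : R) ^ i * (-1 * t) ^ k = (-1) ^ (i + k) * t ^ k := by ring
  push_cast
  rw [h]
  split_ifs with hik
  · rw [hik.neg_one_pow]
    ring
  · rw [(Nat.not_even_iff_odd.mp hik).neg_one_pow]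
    ring

theorem sum_abs_det_vandermonde_units_smul {n : ℕ} {x : Fin n → ℝ} (hx : x ∈ chamber n) :
    ∑ ε : Fin n → ℤˣ, |(vandermonde (ε • x)).det| = 2 ^ n * (checkerboardVandermonde x).det := by
  have sum_rows := (detRowAlternating (n := Fin n) (R := ℝ)).toMultilinearMap.map_sum
    fun i (ε : ℤˣ) (k : Fin n) => ((ε : ℤ) : ℝ) ^ (i : ℕ) * ((ε : ℤ) * x i) ^ (k : ℕ)
  calc ∑ ε : Fin n → ℤˣ, |(vandermonde (ε • x)).det|
      = (of fun i k : Fin n =>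
          ∑ ε : ℤˣ, ((ε : ℤ) : ℝ) ^ (i : ℕ) * ((ε : ℤ) * x i) ^ (k : ℕ)).det := by
        simp only [abs_det_vandermonde_units_smul hx]
        refine sum_rows.symm.trans (congrArg det ?_)
        ext i k
        simp only [Finset.sum_apply, of_apply]
    _ = ((2 : ℝ) • checkerboardVandermonde x).det := by
        simp only [sum_units_pow_mul_mul_pow]
        rfl
    _ = _ := by rw [det_smul, Fintype.card_fin]

/-- The positions `2 i + μ` of the `m` points that survive the decimation. -/
def keptIndex {m : ℕ} (μ : Fin 2) (i : Fin m) : Fin (2 * m + μ) := ⟨2 * i + μ, by omega⟩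

/-- The positions `2 i + 1 - μ`, complementary to those of `keptIndex`. -/
def droppedIndex {m : ℕ} (μ : Fin 2) (i : Fin (m + μ)) : Fin (2 * m + μ) :=
  ⟨2 * i + 1 - μ, by omega⟩

/-- The decomposition of the `2 m + μ` positions into kept and dropped ones. -/
noncomputable def interleave (m : ℕ) (μ : Fin 2) : Fin m ⊕ Fin (m + μ) ≃ Fin (2 * m + μ) :=
  .ofBijective (Sum.elim (keptIndex μ) (droppedIndex μ)) <| by
    rw [Fintype.bijective_iff_injective_and_card]
    refine ⟨?_, by simp only [Fintype.card_sum, Fintype.card_fin]; omega⟩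
    rintro (i | i) (j | j) h <;>
      simp only [Sum.elim_inl, Sum.elim_inr, keptIndex, droppedIndex, Fin.mk.injEq,
        Sum.inl.injEq, Sum.inr.injEq, reduceCtorEq] at h ⊢ <;>
      omega

theorem det_checkerboardVandermonde {R : Type*} [CommRing R] {m : ℕ} (μ : Fin 2)
    (x : Fin (2 * m + μ) → R) :
    (checkerboardVandermonde x).det =
      (of fun i k : Fin m => x (keptIndex μ i) ^ (2 * (k : ℕ) + μ)).det *
      (of fun i k : Fin (m + μ) => x (droppedIndex μ i) ^ (2 * (k : ℕ) + 1 - μ)).det := by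
  rw [← det_submatrix_equiv_self (interleave m μ), ← det_fromBlocks_zero₂₁ _ 0]
  congr 1
  ext (i | i) (k | k) <;>
    simp only [submatrix_apply, checkerboardVandermonde, of_apply, interleave,
      Equiv.ofBijective_apply, Sum.elim_inl, Sum.elim_inr, keptIndex, droppedIndex,
      fromBlocks_apply₁₁, fromBlocks_apply₁₂, fromBlocks_apply₂₁, fromBlocks_apply₂₂,
      Matrix.zero_apply, Nat.even_iff]
  · exact if_pos (by omega)
  · exact if_neg (by omega)
  · exact if_neg (by omega)
  · exact if_pos (by omega)

theorem det_eq_of_forall_row_eq_add_succ {R : Type*} [CommRing R] {n : ℕ}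
    {A B : Matrix (Fin (n + 1)) (Fin (n + 1)) R} (hlast : ∀ j, A (.last n) j = B (.last n) j)
    (hcastSucc : ∀ (i : Fin n) j, A i.castSucc j = B i.castSucc j + A i.succ j) :
    A.det = B.det := by
  rw [← det_submatrix_equiv_self Fin.revPerm A, ← det_submatrix_equiv_self Fin.revPerm B]
  refine det_eq_of_forall_row_eq_smul_add_pred (fun _ => 1) (fun j => ?_) fun i j => ?_
  · simpa using hlast j.rev
  · simpa [Fin.rev_succ, Fin.rev_castSucc] using hcastSucc i.rev j.rev

end Determinants

section IntegralDet

open Matrix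

variable {ι α : Type*} [Fintype ι] [DecidableEq ι] [MeasurableSpace α]

theorem integrable_det_pi {μ : ι → Measure α} [∀ i, SigmaFinite (μ i)] {φ : ι → α → ℝ}
    (hφ : ∀ i k, Integrable (φ k) (μ i)) :
    Integrable (fun b => (of fun i k => φ k (b i)).det) (.pi μ) := by
  simp only [det_eq_sum_sign_mul_prod, of_apply]
  exact integrable_finsetSum _ fun σ _ =>
    (Integrable.fintype_prod fun i => hφ i (σ i)).const_mul _

theorem integral_det_pi {μ : ι → Measure α} [∀ i, SigmaFinite (μ i)] {φ : ι → α → ℝ}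
    (hφ : ∀ i k, Integrable (φ k) (μ i)) :
    ∫ b, (of fun i k => φ k (b i)).det ∂.pi μ = (of fun i k => ∫ t, φ k t ∂μ i).det := by
  simp only [det_eq_sum_sign_mul_prod, of_apply]
  rw [integral_finsetSum _ fun σ _ => (Integrable.fintype_prod fun i => hφ i (σ i)).const_mul _]
  simp only [integral_const_mul]
  exact Finset.sum_congr rfl fun σ _ =>
    congrArg _ (integral_fintype_prod_eq_prod fun i => φ (σ i))

theorem integrable_det_mul_det_pi {μ : ι → Measure α} [∀ i, SigmaFinite (μ i)] {φ ψ : ι → α → ℝ}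
    (h : ∀ i k l, Integrable (fun t => φ k t * ψ l t) (μ i)) :
    Integrable (fun b => (of fun i k => φ k (b i)).det * (of fun i k => ψ k (b i)).det)
      (.pi μ) := by
  simp only [det_eq_sum_sign_mul_prod, of_apply, Finset.sum_mul_sum]
  refine integrable_finsetSum _ fun σ _ => integrable_finsetSum _ fun τ _ => ?_
  have hprod := Integrable.fintype_prod fun i => h i (σ i) (τ i)
  simpa only [Finset.prod_mul_distrib, mul_mul_mul_comm] using
    hprod.const_mul (((σ.sign : ℤ) : ℝ) * (τ.sign : ℤ))

/-- The interval between `α i` and the next value of the increasing tuple `α`, unbounded for the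
last index. -/
def gapInterval {n : ℕ} (α : Fin n → ℝ) (i : Fin n) : Set ℝ :=
  {b | α i < b ∧ ∀ j, i < j → b < α j}

theorem gapInterval_last {n : ℕ} (α : Fin (n + 1) → ℝ) :
    gapInterval α (.last n) = Set.Ioi (α (.last n)) := by
  ext b
  simp [gapInterval, (Fin.le_last _).not_gt]

theorem gapInterval_castSucc {n : ℕ} {α : Fin (n + 1) → ℝ} (hα : Monotone α) (i : Fin n) :
    gapInterval α i.castSucc = Set.Ioo (α i.castSucc) (α i.succ) := by
  ext b
  refine and_congr_right fun _ => ⟨fun h => h _ i.castSucc_lt_succ, fun h j hij => ?_⟩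
  exact h.trans_le (hα (Fin.castSucc_lt_iff_succ_le.mp hij))

theorem det_integral_gapInterval {n : ℕ} {α : Fin n → ℝ} (hα : Monotone α) {φ : Fin n → ℝ → ℝ}
    (hφ : ∀ k, Integrable (φ k)) :
    (of fun i k => ∫ b in gapInterval α i, φ k b).det =
      (of fun i k => ∫ b in Set.Ioi (α i), φ k b).det := by
  obtain _ | n := n
  · simp
  refine (det_eq_of_forall_row_eq_add_succ (fun k => ?_) fun i k => ?_).symm
  · simp only [of_apply, gapInterval_last]
  · have hle : α i.castSucc ≤ α i.succ := hα i.castSucc_lt_succ.le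
    simp only [of_apply, gapInterval_castSucc hα]
    rw [← integral_Ioc_eq_integral_Ioo, ← Set.Ioc_union_Ioi_eq_Ioi hle,
      setIntegral_union (Set.Ioc_disjoint_Ioi le_rfl) measurableSet_Ioi
        (hφ k).integrableOn (hφ k).integrableOn]

theorem setIntegral_det_gapInterval {n : ℕ} {α : Fin n → ℝ} (hα : Monotone α)
    {φ : Fin n → ℝ → ℝ} (hφ : ∀ k, Integrable (φ k)) :
    ∫ b in Set.univ.pi (gapInterval α), (of fun i k => φ k (b i)).det =
      (of fun i k => ∫ b in Set.Ioi (α i), φ k b).det := by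
  rw [volume_pi, Measure.restrict_pi_pi, integral_det_pi fun _ k => (hφ k).integrableOn,
    det_integral_gapInterval hα hφ]

end IntegralDet

section GaussTail

open Matrix

theorem integrable_pow_mul_exp_neg_sq_div_two (j : ℕ) :
    Integrable fun b : ℝ => b ^ j * Real.exp (-b ^ 2 / 2) := by
  have h := integrable_rpow_mul_exp_neg_mul_sq (b := 1 / 2) (by norm_num) (s := j)
    (neg_one_lt_zero.trans_le j.cast_nonneg)
  simpa [neg_div, div_eq_inv_mul] using h

theorem hasDerivAt_exp_neg_sq_div_two (t : ℝ) :
    HasDerivAt (fun b : ℝ => Real.exp (-b ^ 2 / 2)) (-(t * Real.exp (-t ^ 2 / 2))) t := by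
  convert! ((hasDerivAt_pow 2 t).fun_neg.div_const 2).exp using 1
  simp only [Nat.cast_ofNat, Nat.add_one_sub_one, pow_one]
  ring

/-- The incomplete Gaussian moments. -/
noncomputable def gaussTail (j : ℕ) (t : ℝ) : ℝ :=
  ∫ b in Set.Ioi t, b ^ j * Real.exp (-b ^ 2 / 2)

theorem setIntegral_Ioi_of_hasDerivAt_of_integrable {E : Type*} [NormedAddCommGroup E]
    [NormedSpace ℝ E] [CompleteSpace E] {f f' : ℝ → E}
    (hderiv : ∀ b, HasDerivAt f (f' b) b) (hf' : Integrable f') (hf : Integrable f) (t : ℝ) :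
    ∫ b in Set.Ioi t, f' b = -f t := by
  rw [integral_Ioi_of_hasDerivAt_of_tendsto' (fun b _ => hderiv b) hf'.integrableOn
    (tendsto_zero_of_hasDerivAt_of_integrableOn_Ioi (fun b _ => hderiv b) hf'.integrableOn
      hf.integrableOn (a := t)), zero_sub]

theorem gaussTail_one (t : ℝ) : gaussTail 1 t = Real.exp (-t ^ 2 / 2) := by
  have h := setIntegral_Ioi_of_hasDerivAt_of_integrable hasDerivAt_exp_neg_sq_div_two
    (by simpa using (integrable_pow_mul_exp_neg_sq_div_two 1).neg)
    (by simpa using integrable_pow_mul_exp_neg_sq_div_two 0) t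
  simpa [gaussTail, integral_neg] using h

theorem gaussTail_add_two (j : ℕ) (t : ℝ) :
    gaussTail (j + 2) t = t ^ (j + 1) * Real.exp (-t ^ 2 / 2) + (j + 1) * gaussTail j t := by
  have hderiv (b : ℝ) : HasDerivAt (fun b : ℝ => b ^ (j + 1) * Real.exp (-b ^ 2 / 2))
      ((j + 1) * (b ^ j * Real.exp (-b ^ 2 / 2)) - b ^ (j + 2) * Real.exp (-b ^ 2 / 2)) b := by
    convert! (hasDerivAt_pow (j + 1) b).mul (hasDerivAt_exp_neg_sq_div_two b) using 1
    push_cast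
    ring
  have hj := (integrable_pow_mul_exp_neg_sq_div_two j).const_mul (j + 1 : ℝ)
  have hj2 := integrable_pow_mul_exp_neg_sq_div_two (j + 2)
  have h := setIntegral_Ioi_of_hasDerivAt_of_integrable hderiv (hj.sub hj2)
    (integrable_pow_mul_exp_neg_sq_div_two (j + 1)) t
  rw [integral_sub hj.integrableOn hj2.integrableOn, integral_const_mul] at h
  simp only [gaussTail]
  linarith

/-- The square root of the joint density of the kept points, up to normalization. -/
noncomputable def sqrtDensity (μ : ℕ) {m : ℕ} (a : Fin m → ℝ) : ℝ :=
  (∏ i, a i ^ μ * Real.exp (-(a i) ^ 2 / 2)) * (vandermonde (a ^ 2)).det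

theorem det_pow_mul_exp (μ : ℕ) {m : ℕ} (a : Fin m → ℝ) :
    (of fun i k : Fin m => a i ^ (2 * (k : ℕ) + μ) * Real.exp (-(a i) ^ 2 / 2)).det =
      sqrtDensity μ a := by
  rw [sqrtDensity, Finset.prod_mul_distrib, mul_right_comm, ← det_pow_two_mul_add, mul_comm,
    ← det_mul_column]
  congr 1
  ext i k
  exact mul_comm _ _

theorem det_gaussTail_odd {m : ℕ} (a : Fin m → ℝ) :
    (of fun i k : Fin m => gaussTail (2 * k + 1) (a i)).det = sqrtDensity 0 a := by
  rw [← det_pow_mul_exp]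
  obtain _ | m := m
  · simp
  refine det_eq_of_forall_col_eq_smul_add_pred (fun k => 2 * (k : ℝ) + 2) (fun i => ?_)
    fun i k => ?_
  · simp [gaussTail_one]
  · simp only [of_apply, Fin.val_succ, Fin.val_castSucc]
    rw [show 2 * ((k : ℕ) + 1) + 1 = 2 * k + 1 + 2 by ring, gaussTail_add_two]
    push_cast
    ring

theorem det_gaussTail_even {m : ℕ} (a : Fin m → ℝ) :
    (of fun i k : Fin (m + 1) => gaussTail (2 * k) ((Fin.cons 0 a : Fin (m + 1) → ℝ) i)).det =
      gaussTail 0 0 * sqrtDensity 1 a := by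
  set α : Fin (m + 1) → ℝ := Fin.cons 0 a
  calc _ = (of fun i => (Fin.cons (gaussTail 0 (α i)) fun k : Fin m =>
          α i ^ (2 * (k : ℕ) + 1) * Real.exp (-(α i) ^ 2 / 2) : Fin (m + 1) → ℝ)).det := by
        refine det_eq_of_forall_col_eq_smul_add_pred (fun k => 2 * (k : ℝ) + 1) (fun i => ?_)
          fun i k => ?_
        · simp
        · simp [mul_add, gaussTail_add_two]
    _ = _ := by
        rw [det_succ_row_zero, Fin.sum_univ_succ, ← det_pow_mul_exp]
        simp [α, submatrix]

end GaussTail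

section Counting

/-- The number of coordinates of `x` below `s`. -/
noncomputable def countBelow {ι : Type*} [Fintype ι] (s : ℝ) (x : ι → ℝ) : ℕ :=
  (Finset.univ.filter fun i => x i < s).card

theorem countBelow_comp_equiv {ι κ : Type*} [Fintype ι] [Fintype κ] (s : ℝ) (x : κ → ℝ)
    (e : ι ≃ κ) : countBelow s (x ∘ e) = countBelow s x := by
  simp only [countBelow, Finset.card_filter]
  exact e.sum_comp fun i => if x i < s then 1 else 0

@[fun_prop]
theorem measurable_countBelow {ι : Type*} [Fintype ι] (s : ℝ) :
    Measurable fun x : ι → ℝ => countBelow s x := by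
  simp only [countBelow, Finset.card_filter]
  exact Finset.measurable_sum _ fun i _ =>
    .ite (measurableSet_lt (measurable_pi_apply i) measurable_const) measurable_const
      measurable_const

theorem measurableSet_countBelow {ι : Type*} [Fintype ι] (s : ℝ) (T : Set ℕ) :
    MeasurableSet {a : ι → ℝ | countBelow s a ∈ T} :=
  measurable_countBelow s (.of_discrete (s := T))

theorem countBelow_sq {ι : Type*} [Fintype ι] {s : ℝ} (hs : 0 ≤ s) {a : ι → ℝ}
    (ha : ∀ i, 0 ≤ a i) : countBelow (s ^ 2) (a ^ 2) = countBelow s a := by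
  simp only [countBelow, Pi.pow_apply, pow_lt_pow_iff_left₀ (ha _) hs two_ne_zero]

theorem lt_countBelow_iff {n : ℕ} {x : Fin n → ℝ} (hx : StrictMono x) (s : ℝ) (i : Fin n) :
    (i : ℕ) < countBelow s x ↔ x i < s := by
  refine ⟨fun h => ?_, fun h => ?_⟩
  · contrapose! h
    calc countBelow s x ≤ (Finset.Iio i).card := Finset.card_le_card fun j hj =>
          Finset.mem_Iio.mpr (hx.lt_iff_lt.mp ((Finset.mem_filter.mp hj).2.trans_le h))
      _ = i := Fin.card_Iio i
  · calc (i : ℕ) < (Finset.Iic i).card := by simp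
      _ ≤ countBelow s x := Finset.card_le_card fun j hj =>
          Finset.mem_filter.mpr ⟨Finset.mem_univ j,
            (hx.monotone (Finset.mem_Iic.mp hj)).trans_lt h⟩

theorem countBelow_comp_keptIndex {m : ℕ} (μ : Fin 2) {x : Fin (2 * m + μ) → ℝ}
    (hx : StrictMono x) (s : ℝ) :
    countBelow s (x ∘ keptIndex μ) = (countBelow s x + 1 - μ) / 2 := by
  have hle : countBelow s x ≤ 2 * m + μ :=
    (Finset.card_filter_le ..).trans_eq (Finset.card_fin _)
  have hkept (i : Fin m) : x (keptIndex μ i) < s ↔ (i : ℕ) < (countBelow s x + 1 - μ) / 2 := by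
    rw [← lt_countBelow_iff hx]
    change 2 * (i : ℕ) + μ < _ ↔ _
    omega
  calc countBelow s (x ∘ keptIndex μ)
      = (Finset.univ.filter fun i : Fin m => (i : ℕ) < (countBelow s x + 1 - μ) / 2).card :=
        congrArg Finset.card (Finset.filter_congr fun i _ => hkept i)
    _ = min m ((countBelow s x + 1 - μ) / 2) := Fin.card_filter_val_lt
    _ = _ := min_eq_right (by omega)

end Counting

section Interlacing

/-- The left endpoints of the intervals in which the dropped points vary when the kept points are
at `a`; for `μ = 1` the first of them is the origin. -/
def lowerEndpoint {m : ℕ} (μ : Fin 2) (a : Fin m → ℝ) (j : Fin (m + μ)) : ℝ :=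
  if h : (j : ℕ) < μ then 0 else a ⟨j - μ, by omega⟩

variable {m : ℕ} {μ : Fin 2}

theorem lowerEndpoint_addNat (a : Fin m → ℝ) (i : Fin m) :
    lowerEndpoint μ a (i.addNat μ) = a i := by
  simp [lowerEndpoint]

theorem lowerEndpoint_nonneg {a : Fin m → ℝ} (ha : a ∈ chamber m) (j : Fin (m + μ)) :
    0 ≤ lowerEndpoint μ a j := by
  unfold lowerEndpoint
  split_ifs
  exacts [le_rfl, (ha.1 _).le]

theorem strictMono_lowerEndpoint {a : Fin m → ℝ} (ha : a ∈ chamber m) :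
    StrictMono (lowerEndpoint μ a) := by
  intro i j hij
  have hj : ¬(j : ℕ) < μ := by omega
  simp only [lowerEndpoint, dif_neg hj]
  split_ifs
  exacts [ha.1 _, ha.2 (Fin.mk_lt_mk.mpr (by omega))]

theorem dropped_mem_gapInterval {x : Fin (2 * m + μ) → ℝ} (hx : x ∈ chamber (2 * m + μ))
    (j : Fin (m + μ)) :
    x (droppedIndex μ j) ∈ gapInterval (lowerEndpoint μ (x ∘ keptIndex μ)) j := by
  refine ⟨?_, fun l hjl => ?_⟩
  · unfold lowerEndpoint
    split_ifs
    exacts [hx.1 _, hx.2 (Fin.mk_lt_mk.mpr (by dsimp only; omega))]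
  · rw [lowerEndpoint, dif_neg (by omega)]
    exact hx.2 (Fin.mk_lt_mk.mpr (by dsimp only; omega))

theorem strictMono_of_dropped_mem_gapInterval {x : Fin (2 * m + μ) → ℝ}
    (ha : x ∘ keptIndex μ ∈ chamber m)
    (hb : ∀ j, x (droppedIndex μ j) ∈ gapInterval (lowerEndpoint μ (x ∘ keptIndex μ)) j) :
    StrictMono x := by
  intro p q hpq
  obtain ⟨p, rfl⟩ := (interleave m μ).surjective p
  obtain ⟨q, rfl⟩ := (interleave m μ).surjective q
  rcases p with i | i <;> rcases q with j | j <;>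
    simp only [interleave, Equiv.ofBijective_apply, Sum.elim_inl, Sum.elim_inr, keptIndex,
      droppedIndex, Fin.mk_lt_mk] at hpq
  · exact ha.2 (show i < j by omega)
  · calc x (keptIndex μ i) = lowerEndpoint μ (x ∘ keptIndex μ) (i.addNat μ) :=
          (lowerEndpoint_addNat (x ∘ keptIndex μ) i).symm
      _ ≤ lowerEndpoint μ (x ∘ keptIndex μ) j :=
          (strictMono_lowerEndpoint ha).monotone (Fin.mk_le_mk.mpr (by omega))
      _ < x (droppedIndex μ j) := (hb j).1
  · calc x (droppedIndex μ i) < lowerEndpoint μ (x ∘ keptIndex μ) (j.addNat μ) :=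
          (hb i).2 _ (Fin.mk_lt_mk.mpr (by omega))
      _ = x (keptIndex μ j) := lowerEndpoint_addNat ..
  · exact ((hb i).2 j (by omega)).trans (hb j).1

theorem mem_chamber_iff {x : Fin (2 * m + μ) → ℝ} :
    x ∈ chamber (2 * m + μ) ↔ x ∘ keptIndex μ ∈ chamber m ∧
      ∀ j, x (droppedIndex μ j) ∈ gapInterval (lowerEndpoint μ (x ∘ keptIndex μ)) j := by
  refine ⟨fun hx => ⟨⟨fun i => hx.1 _, fun i j hij => hx.2 ?_⟩, dropped_mem_gapInterval hx⟩,
    fun ⟨ha, hb⟩ => ⟨fun p => ?_, strictMono_of_dropped_mem_gapInterval ha hb⟩⟩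
  · exact Fin.mk_lt_mk.mpr (by omega)
  · obtain ⟨i | j, rfl⟩ := (interleave m μ).surjective p
    exacts [ha.1 i, (lowerEndpoint_nonneg ha j).trans_lt (hb j).1]

theorem setIntegral_prod_eq_integral_fiber {α β E : Type*} [MeasurableSpace α]
    [MeasurableSpace β] [NormedAddCommGroup E] [NormedSpace ℝ E] {ρ : Measure α} {ν : Measure β}
    [SFinite ρ] [SFinite ν] {S : Set (α × β)} (hS : MeasurableSet S) {f : α × β → E}
    (hf : IntegrableOn f S (ρ.prod ν)) :
    ∫ z in S, f z ∂ρ.prod ν = ∫ a, ∫ b in Prod.mk a ⁻¹' S, f (a, b) ∂ν ∂ρ := by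
  rw [← integral_indicator hS, integral_prod _ (hf.integrable_indicator hS)]
  simp only [← integral_indicator (measurable_prodMk_left hS)]
  rfl

/-- The map `x ↦ (x ∘ keptIndex μ, x ∘ droppedIndex μ)` as a measurable equivalence. -/
noncomputable def splitCoordinates (m : ℕ) (μ : Fin 2) :
    (Fin (2 * m + μ) → ℝ) ≃ᵐ (Fin m → ℝ) × (Fin (m + μ) → ℝ) :=
  (MeasurableEquiv.piCongrLeft (fun _ => ℝ) (interleave m μ)).symm.trans
    (.sumPiEquivProdPi fun _ => ℝ)

theorem splitCoordinates_apply (x : Fin (2 * m + μ) → ℝ) :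
    splitCoordinates m μ x = (x ∘ keptIndex μ, x ∘ droppedIndex μ) :=
  rfl

theorem measurePreserving_splitCoordinates :
    MeasurePreserving (splitCoordinates m μ) :=
  (volume_measurePreserving_piCongrLeft (fun _ => ℝ) (interleave m μ)).symm.trans
    (volume_measurePreserving_sumPiEquivProdPi fun _ => ℝ)

theorem setIntegral_chamber_eq_integral_gapInterval {E : Type*} [NormedAddCommGroup E]
    [NormedSpace ℝ E] {U : Set (Fin m → ℝ)} (hU : MeasurableSet U)
    {f : (Fin m → ℝ) × (Fin (m + μ) → ℝ) → E}
    (hf : IntegrableOn (fun x => f (x ∘ keptIndex μ, x ∘ droppedIndex μ)) (chamber (2 * m + μ))) :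
    ∫ x in chamber (2 * m + μ) ∩ {x | x ∘ keptIndex μ ∈ U},
        f (x ∘ keptIndex μ, x ∘ droppedIndex μ) =
      ∫ a in chamber m ∩ U, ∫ b in Set.univ.pi (gapInterval (lowerEndpoint μ a)), f (a, b) := by
  let e := splitCoordinates m μ
  have he : MeasurePreserving e := measurePreserving_splitCoordinates
  let S : Set ((Fin m → ℝ) × (Fin (m + μ) → ℝ)) :=
    {z | z.1 ∈ chamber m ∩ U ∧ z.2 ∈ Set.univ.pi (gapInterval (lowerEndpoint μ z.1))}
  have preimage_S : e ⁻¹' S = chamber (2 * m + μ) ∩ {x | x ∘ keptIndex μ ∈ U} := by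
    ext x
    simp only [S, e, Set.mem_preimage, splitCoordinates_apply, Set.mem_ofPred_eq, Set.mem_inter_iff,
      mem_chamber_iff, Set.mem_univ_pi, Function.comp_apply]
    tauto
  have hS : MeasurableSet S := by
    rw [← e.measurableSet_preimage, preimage_S]
    exact measurableSet_chamber.inter (hU.preimage (by fun_prop))
  have hfS : IntegrableOn f S := by
    rw [← he.integrableOn_comp_preimage e.measurableEmbedding, preimage_S]
    exact hf.mono_set Set.inter_subset_left
  have fiber (a) (ha : a ∈ chamber m ∩ U) :
      Prod.mk a ⁻¹' S = Set.univ.pi (gapInterval (lowerEndpoint μ a)) := by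
    ext b
    exact and_iff_right ha
  have fiber_eq_empty (a) (ha : a ∉ chamber m ∩ U) : Prod.mk a ⁻¹' S = ∅ :=
    Set.eq_empty_of_forall_notMem fun _ hb => ha hb.1
  calc ∫ x in chamber (2 * m + μ) ∩ {x | x ∘ keptIndex μ ∈ U},
        f (x ∘ keptIndex μ, x ∘ droppedIndex μ)
      = ∫ z in S, f z := by
        rw [← preimage_S]
        exact he.setIntegral_preimage_emb e.measurableEmbedding f S
    _ = ∫ a, ∫ b in Prod.mk a ⁻¹' S, f (a, b) := setIntegral_prod_eq_integral_fiber hS hfS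
    _ = ∫ a in chamber m ∩ U, ∫ b in Prod.mk a ⁻¹' S, f (a, b) := by
        rw [setIntegral_eq_integral_of_forall_compl_eq_zero fun a ha => ?_]
        rw [fiber_eq_empty a ha, setIntegral_empty]
    _ = _ := setIntegral_congr_fun (measurableSet_chamber.inter hU) fun a ha => by
        simp only [fiber a ha]

end Interlacing

section Integrands

open Matrix

theorem goeTotalIntegrand_eq {n : ℕ} (x : Fin n → ℝ) :
    goeTotalIntegrand n x = (∏ i, Real.exp (-(x i) ^ 2 / 2)) * |(vandermonde x).det| := by
  simp only [goeTotalIntegrand, ← prod_Iio_sub_eq_det_vandermonde, Finset.abs_prod]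

theorem lueTotalIntegrand_eq {m : ℕ} (μ : ℕ) (y : Fin m → ℝ) :
    lueTotalIntegrand m μ y =
      (∏ i, y i ^ ((μ : ℝ) - 1 / 2) * Real.exp (-(y i))) * (vandermonde y).det ^ 2 := by
  simp only [lueTotalIntegrand, ← prod_Iio_sub_eq_det_vandermonde, Finset.prod_pow]

theorem goeGapIntegrand_eq_indicator (n : ℕ) (s : ℝ) (j : ℤ) :
    goeGapIntegrand n s j =
      {x | (countBelow s |x| : ℤ) = j}.indicator (goeTotalIntegrand n) := by
  ext x
  simp only [goeGapIntegrand, goeTotalIntegrand, countBelow, Set.indicator_apply, Pi.abs_apply,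
    Set.mem_ofPred_eq]
  rfl

theorem lueGapIntegrand_eq_indicator (m μ : ℕ) (c : ℝ) (k : ℕ) :
    lueGapIntegrand m μ c k =
      {y | countBelow c y = k}.indicator (lueTotalIntegrand m μ) := by
  ext y
  simp [lueGapIntegrand, lueTotalIntegrand, countBelow, Set.indicator_apply]

theorem goeTotalIntegrand_comp_perm {n : ℕ} (σ : Equiv.Perm (Fin n)) (x : Fin n → ℝ) :
    goeTotalIntegrand n (x ∘ σ) = goeTotalIntegrand n x := by
  rw [goeTotalIntegrand_eq, goeTotalIntegrand_eq, abs_det_vandermonde_comp_perm]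
  exact congrArg (· * _) (Equiv.prod_comp σ fun i => Real.exp (-(x i) ^ 2 / 2))

theorem lueTotalIntegrand_comp_perm {m : ℕ} (μ : ℕ) (σ : Equiv.Perm (Fin m)) (y : Fin m → ℝ) :
    lueTotalIntegrand m μ (y ∘ σ) = lueTotalIntegrand m μ y := by
  rw [lueTotalIntegrand_eq, lueTotalIntegrand_eq, ← sq_abs, abs_det_vandermonde_comp_perm, sq_abs]
  exact congrArg (· * _) (Equiv.prod_comp σ fun i => y i ^ ((μ : ℝ) - 1 / 2) * Real.exp (-(y i)))

theorem integrable_goeTotalIntegrand (n : ℕ) : Integrable (goeTotalIntegrand n) := by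
  have h := (integrable_det_pi (μ := fun _ : Fin n => volume) fun _ k : Fin n =>
    integrable_pow_mul_exp_neg_sq_div_two k).abs
  refine h.congr (.of_forall fun x => ?_)
  have exp_nonneg : 0 ≤ ∏ i, Real.exp (-(x i) ^ 2 / 2) := by positivity
  rw [goeTotalIntegrand_eq, ← abs_of_nonneg exp_nonneg, ← abs_mul, ← det_mul_column]
  simp only [vandermonde_apply, mul_comm]

theorem integrableOn_pow_mul_rpow_sub_half_mul_exp_neg (μ j : ℕ) :
    IntegrableOn (fun t : ℝ => t ^ j * (t ^ ((μ : ℝ) - 1 / 2) * Real.exp (-t))) (Set.Ioi 0) := by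
  have hpos : 0 < (j : ℝ) + μ + 1 / 2 := by positivity
  refine (Real.GammaIntegral_convergent hpos).congr_fun (fun t (ht : 0 < t) => ?_)
    measurableSet_Ioi
  dsimp only
  rw [show (j : ℝ) + μ + 1 / 2 - 1 = j + (μ - 1 / 2) by ring, Real.rpow_add ht,
    Real.rpow_natCast]
  ring

theorem integrableOn_lueTotalIntegrand (m μ : ℕ) :
    IntegrableOn (lueTotalIntegrand m μ) {y : Fin m → ℝ | ∀ i, 0 < y i} := by
  have hpi : {y : Fin m → ℝ | ∀ i, 0 < y i} = Set.univ.pi fun _ => Set.Ioi 0 := by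
    ext y
    simp
  rw [IntegrableOn, hpi, volume_pi, Measure.restrict_pi_pi]
  have h := integrable_det_mul_det_pi (μ := fun _ : Fin m => volume.restrict (Set.Ioi 0))
    (φ := fun k t => t ^ (k : ℕ) * (t ^ ((μ : ℝ) - 1 / 2) * Real.exp (-t)))
    (ψ := fun l t => t ^ (l : ℕ)) fun _ k l => by
      refine (integrableOn_pow_mul_rpow_sub_half_mul_exp_neg μ (k + l)).congr
        (.of_forall fun t => ?_)
      dsimp only
      ring
  refine h.congr (.of_forall fun y => ?_)
  rw [lueTotalIntegrand_eq, sq, ← mul_assoc, ← det_mul_column]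
  simp only [vandermonde_apply, mul_comm]
  rfl

theorem integral_goeTotalIntegrand_pos (n : ℕ) : 0 < ∫ x, goeTotalIntegrand n x := by
  refine integral_pos_of_integrable_nonneg_nonzero (x := fun i : Fin n => (i : ℝ)) ?_
    (integrable_goeTotalIntegrand n) (fun x => ?_) ?_
  · unfold goeTotalIntegrand
    fun_prop
  · unfold goeTotalIntegrand
    positivity
  · have hinj : Function.Injective fun i : Fin n => (i : ℝ) :=
      Nat.cast_injective.comp Fin.val_injective
    rw [goeTotalIntegrand_eq]
    exact mul_ne_zero (by positivity) (abs_ne_zero.mpr (det_vandermonde_ne_zero_iff.mpr hinj))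

theorem measurableSet_countBelow_abs {n : ℕ} (s : ℝ) (T : Set ℕ) :
    MeasurableSet {x : Fin n → ℝ | countBelow s |x| ∈ T} := by
  have habs : Measurable fun x : Fin n → ℝ => |x| :=
    measurable_pi_lambda _ fun i => (measurable_pi_apply i).abs
  exact habs (measurableSet_countBelow s T)

theorem integrable_goeGapIntegrand (n : ℕ) (s : ℝ) (j : ℤ) :
    Integrable (goeGapIntegrand n s j) := by
  rw [goeGapIntegrand_eq_indicator]
  exact (integrable_goeTotalIntegrand n).indicator
    (measurableSet_countBelow_abs s {c | (c : ℤ) = j})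

theorem integrableOn_lueGapIntegrand (m μ : ℕ) (c : ℝ) (k : ℕ) :
    IntegrableOn (lueGapIntegrand m μ c k) {y : Fin m → ℝ | ∀ i, 0 < y i} := by
  rw [lueGapIntegrand_eq_indicator]
  exact (integrableOn_lueTotalIntegrand m μ).indicator
    (measurable_countBelow c (measurableSet_singleton k))

end Integrands

section GOE

open Matrix

theorem det_gaussTail_lowerEndpoint {m : ℕ} (μ : Fin 2) (a : Fin m → ℝ) :
    (of fun i k : Fin (m + μ) => gaussTail (2 * k + 1 - μ) (lowerEndpoint μ a i)).det =
      gaussTail 0 0 ^ (μ : ℕ) * sqrtDensity μ a := by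
  match μ with
  | 0 =>
    simpa [lowerEndpoint] using! det_gaussTail_odd a
  | 1 =>
    have hcons : lowerEndpoint 1 a = (Fin.cons 0 a : Fin (m + 1) → ℝ) :=
      funext fun i => Fin.cases rfl (fun _ => rfl) i
    simpa [hcons] using! det_gaussTail_even a

theorem setIntegral_gapInterval_lowerEndpoint {m : ℕ} (μ : Fin 2) {a : Fin m → ℝ}
    (ha : a ∈ chamber m) :
    ∫ b in Set.univ.pi (gapInterval (lowerEndpoint μ a)), (of fun i k : Fin (m + μ) =>
        b i ^ (2 * (k : ℕ) + 1 - μ) * Real.exp (-(b i) ^ 2 / 2)).det =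
      gaussTail 0 0 ^ (μ : ℕ) * sqrtDensity μ a := by
  rw [← det_gaussTail_lowerEndpoint]
  exact setIntegral_det_gapInterval (strictMono_lowerEndpoint ha).monotone fun k =>
    integrable_pow_mul_exp_neg_sq_div_two (2 * (k : ℕ) + 1 - μ)

theorem sum_goeTotalIntegrand_units_smul {m : ℕ} (μ : Fin 2) {x : Fin (2 * m + μ) → ℝ}
    (hx : x ∈ chamber (2 * m + μ)) :
    ∑ ε : Fin (2 * m + μ) → ℤˣ, goeTotalIntegrand _ (ε • x) =
      2 ^ (2 * m + μ : ℕ) * (sqrtDensity μ (x ∘ keptIndex μ) * (of fun i k : Fin (m + μ) =>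
        x (droppedIndex μ i) ^ (2 * (k : ℕ) + 1 - μ) *
          Real.exp (-(x (droppedIndex μ i)) ^ 2 / 2)).det) := by
  have exp_smul (ε : Fin (2 * m + μ) → ℤˣ) (i) : (ε • x) i ^ 2 = x i ^ 2 := by
    rw [← sq_abs, ← Pi.abs_apply, abs_units_smul, Pi.abs_apply, sq_abs]
  have prod_exp : ∏ p, Real.exp (-(x p) ^ 2 / 2) =
      (∏ i, Real.exp (-(x (keptIndex μ i)) ^ 2 / 2)) *
        ∏ j, Real.exp (-(x (droppedIndex μ j)) ^ 2 / 2) := by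
    rw [← (interleave m μ).prod_comp, Fintype.prod_sum_type]
    rfl
  simp only [goeTotalIntegrand_eq, exp_smul]
  rw [← Finset.mul_sum, sum_abs_det_vandermonde_units_smul hx, det_checkerboardVandermonde,
    prod_exp]
  have kept_det := det_pow_two_mul_add (x ∘ keptIndex μ) (μ : ℕ)
  have dropped_exp := det_mul_column (fun i => Real.exp (-(x (droppedIndex μ i)) ^ 2 / 2))
    (of fun i k : Fin (m + μ) => x (droppedIndex μ i) ^ (2 * (k : ℕ) + 1 - μ))
  simp only [of_apply, mul_comm (Real.exp _), Function.comp_apply] at kept_det dropped_exp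
  rw [kept_det, dropped_exp, sqrtDensity, Finset.prod_mul_distrib]
  dsimp only [Function.comp_apply]
  ring
theorem chamber_inter_countBelow_abs {m : ℕ} (μ : Fin 2) (s : ℝ) (T : Set ℕ) :
    chamber (2 * m + μ) ∩ {x | (countBelow s |x| + 1 - μ) / 2 ∈ T} =
      chamber (2 * m + μ) ∩ {x | x ∘ keptIndex μ ∈ {a | countBelow s a ∈ T}} :=
  Set.ext fun x => and_congr_right fun hx => by
    have hnonneg : 0 ≤ x := fun i => (hx.1 i).le
    simp only [Set.mem_ofPred_eq, countBelow_comp_keptIndex μ hx.2, abs_of_nonneg hnonneg]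

theorem setIntegral_goeTotalIntegrand {m : ℕ} (μ : Fin 2) (s : ℝ) (T : Set ℕ) :
    ∫ x in {x | (countBelow s |x| + 1 - μ) / 2 ∈ T}, goeTotalIntegrand (2 * m + μ) x =
      (2 * m + μ).factorial * (2 ^ (2 * m + μ : ℕ) * gaussTail 0 0 ^ (μ : ℕ)) *
        ∫ a in chamber m ∩ {a | countBelow s a ∈ T}, sqrtDensity μ a ^ 2 := by
  set S := {x : Fin (2 * m + μ) → ℝ | (countBelow s |x| + 1 - μ) / 2 ∈ T}
  set U := {a : Fin m → ℝ | countBelow s a ∈ T}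
  have hU : MeasurableSet U := measurableSet_countBelow s T
  let f (z : (Fin m → ℝ) × (Fin (m + μ) → ℝ)) : ℝ :=
    2 ^ (2 * m + μ : ℕ) * (sqrtDensity μ z.1 * (of fun i k : Fin (m + μ) =>
      z.2 i ^ (2 * (k : ℕ) + 1 - μ) * Real.exp (-(z.2 i) ^ 2 / 2)).det)
  have smul_mem_S (ε : Fin (2 * m + μ) → ℤˣ) (x) : ε • x ∈ S ↔ x ∈ S := by
    simp only [S, Set.mem_ofPred_eq, abs_units_smul]
  have comp_perm_mem_S (σ : Equiv.Perm (Fin (2 * m + μ))) (x) : x ∘ σ ∈ S ↔ x ∈ S := by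
    simp only [S, Set.mem_ofPred_eq, show |x ∘ σ| = |x| ∘ σ from rfl, countBelow_comp_equiv]
  have sum_signs : Set.EqOn
      (fun x => ∑ ε : Fin (2 * m + μ) → ℤˣ, goeTotalIntegrand (2 * m + μ) (ε • x))
      (fun x => f (x ∘ keptIndex μ, x ∘ droppedIndex μ)) (chamber (2 * m + μ)) :=
    fun x hx => sum_goeTotalIntegrand_units_smul μ hx
  calc ∫ x in S, goeTotalIntegrand (2 * m + μ) x
      = (2 * m + μ).factorial * ∫ x in chamber (2 * m + μ) ∩ S,
          ∑ ε : Fin (2 * m + μ) → ℤˣ, goeTotalIntegrand _ (ε • x) :=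
        (setIntegral_eq_factorial_smul_setIntegral_chamber smul_mem_S comp_perm_mem_S
          goeTotalIntegrand_comp_perm (integrable_goeTotalIntegrand _)).trans (nsmul_eq_mul ..)
    _ = (2 * m + μ).factorial * ∫ x in chamber (2 * m + μ) ∩ {x | x ∘ keptIndex μ ∈ U},
          f (x ∘ keptIndex μ, x ∘ droppedIndex μ) := by
        rw [chamber_inter_countBelow_abs]
        exact congrArg _ (setIntegral_congr_fun (measurableSet_chamber.inter
          (hU.preimage (by fun_prop))) (sum_signs.mono Set.inter_subset_left))
    _ = (2 * m + μ).factorial * ∫ a in chamber m ∩ U,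
          ∫ b in Set.univ.pi (gapInterval (lowerEndpoint μ a)), f (a, b) := by
        rw [setIntegral_chamber_eq_integral_gapInterval hU
          ((integrable_sum_units_smul (integrable_goeTotalIntegrand _)).integrableOn.congr_fun
            sum_signs measurableSet_chamber)]
    _ = (2 * m + μ).factorial * ∫ a in chamber m ∩ U,
          2 ^ (2 * m + μ : ℕ) * gaussTail 0 0 ^ (μ : ℕ) * sqrtDensity μ a ^ 2 := by
        refine congrArg _ (setIntegral_congr_fun (measurableSet_chamber.inter hU) fun a ha => ?_)
        simp only [f, integral_const_mul, setIntegral_gapInterval_lowerEndpoint μ ha.1]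
        ring
    _ = _ := by rw [integral_const_mul, ← mul_assoc]

theorem integral_goeTotalIntegrand {m : ℕ} (μ : Fin 2) :
    ∫ x, goeTotalIntegrand (2 * m + μ) x =
      (2 * m + μ).factorial * (2 ^ (2 * m + μ : ℕ) * gaussTail 0 0 ^ (μ : ℕ)) *
        ∫ a : Fin m → ℝ in chamber m, sqrtDensity μ a ^ 2 := by
  simpa using setIntegral_goeTotalIntegrand (m := m) μ 0 Set.univ

end GOE

section ChangeOfVariables

theorem integral_image_pi_map {ι E : Type*} [Fintype ι] [NormedAddCommGroup E]
    [NormedSpace ℝ E] {S : Set (ι → ℝ)} (hS : MeasurableSet S) {g g' : ι → ℝ → ℝ}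
    (hg : ∀ x ∈ S, ∀ i, HasDerivAt (g i) (g' i (x i)) (x i)) (hinj : Set.InjOn (Pi.map g) S)
    (F : (ι → ℝ) → E) :
    ∫ y in Pi.map g '' S, F y = ∫ x in S, |∏ i, g' i (x i)| • F (Pi.map g x) := by
  classical
  let J (x : ι → ℝ) : (ι → ℝ) →L[ℝ] ι → ℝ :=
    .pi fun i => (g' i (x i) • ContinuousLinearMap.id ℝ ℝ).comp (.proj i)
  have hasFDerivAt (x) (hx : x ∈ S) : HasFDerivWithinAt (Pi.map g) (J x) S x := by
    refine (hasFDerivAt_pi.mpr fun i => ?_).hasFDerivWithinAt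
    have hgi : HasFDerivAt (g i) (g' i (x i) • ContinuousLinearMap.id ℝ ℝ) (x i) := by
      convert! (hg x hx i).hasFDerivAt using 1
      ext
      simp
    exact hgi.comp x (hasFDerivAt_apply i x)
  have det_J (x) : (J x).det = ∏ i, g' i (x i) := by
    have h := LinearMap.det_pi (R := ℝ) (M := ℝ) fun i => g' i (x i) • LinearMap.id
    simpa using! h
  rw [integral_image_eq_integral_abs_det_fderiv_smul volume hS hasFDerivAt hinj]
  simp only [det_J]

theorem image_sq_chamber (m : ℕ) :
    Pi.map (fun _ t => t ^ 2) '' chamber m = chamber m := by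
  ext y
  constructor
  · rintro ⟨a, ha, rfl⟩
    exact ⟨fun i => pow_pos (ha.1 i) 2, fun i j hij =>
      pow_lt_pow_left₀ (ha.2 hij) (ha.1 i).le two_ne_zero⟩
  · intro hy
    exact ⟨fun i => √(y i), ⟨fun i => Real.sqrt_pos.mpr (hy.1 i), fun i j hij =>
      Real.sqrt_lt_sqrt (hy.1 i).le (hy.2 hij)⟩, funext fun i => Real.sq_sqrt (hy.1 i).le⟩

theorem setIntegral_chamber_eq_setIntegral_sq {E : Type*} [NormedAddCommGroup E]
    [NormedSpace ℝ E] {m : ℕ} {U : Set (Fin m → ℝ)} (hU : MeasurableSet U)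
    (F : (Fin m → ℝ) → E) :
    ∫ y in chamber m ∩ U, F y =
      ∫ a in chamber m ∩ {a | a ^ 2 ∈ U}, (∏ i, 2 * a i) • F (a ^ 2) := by
  have hsq : (Pi.map fun _ t => t ^ 2 : (Fin m → ℝ) → Fin m → ℝ) = fun a => a ^ 2 := rfl
  have hinj : Set.InjOn (Pi.map fun _ t => t ^ 2 : (Fin m → ℝ) → Fin m → ℝ)
      (chamber m ∩ {a | a ^ 2 ∈ U}) := fun a ha b hb hab => funext fun i =>
    (pow_left_inj₀ (ha.1.1 i).le (hb.1.1 i).le two_ne_zero).mp (congrFun hab i)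
  have himage : Pi.map (fun _ t => t ^ 2) '' (chamber m ∩ {a | a ^ 2 ∈ U}) = chamber m ∩ U := by
    rw [show {a | a ^ 2 ∈ U} = Pi.map (fun _ t => t ^ 2) ⁻¹' U from rfl,
      Set.image_inter_preimage, image_sq_chamber]
  have hmeas : MeasurableSet (chamber m ∩ {a | a ^ 2 ∈ U}) :=
    measurableSet_chamber.inter (hU.preimage (by fun_prop))
  rw [← himage, integral_image_pi_map (g' := fun _ t => 2 * t) hmeas
    (fun a _ i => by simpa using hasDerivAt_pow 2 (a i)) hinj]
  refine setIntegral_congr_fun hmeas fun a ha => ?_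
  rw [abs_of_pos (Finset.prod_pos fun i _ => mul_pos two_pos (ha.1.1 i)), hsq]

end ChangeOfVariables

section LUE

theorem prod_two_mul_mul_lueTotalIntegrand_sq (μ : ℕ) {m : ℕ} {a : Fin m → ℝ}
    (ha : ∀ i, 0 < a i) :
    (∏ i, 2 * a i) * lueTotalIntegrand m μ (a ^ 2) = 2 ^ m * sqrtDensity μ a ^ 2 := by
  have weight (i : Fin m) :
      2 * a i * ((a i ^ 2) ^ ((μ : ℝ) - 1 / 2) * Real.exp (-(a i ^ 2))) =
        2 * (a i ^ μ * Real.exp (-(a i) ^ 2 / 2)) ^ 2 := by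
    have hpow : (a i ^ 2) ^ ((μ : ℝ) - 1 / 2) * a i = (a i ^ μ) ^ 2 := by
      rw [Real.rpow_sub (pow_pos (ha i) 2), Real.rpow_natCast, ← Real.sqrt_eq_rpow,
        Real.sqrt_sq (ha i).le, div_mul_cancel₀ _ (ha i).ne', pow_right_comm]
    have hexp : Real.exp (-(a i ^ 2)) = Real.exp (-(a i) ^ 2 / 2) ^ 2 := by
      rw [← Real.exp_nat_mul]
      ring_nf
    rw [hexp, mul_pow, ← hpow]
    ring
  rw [lueTotalIntegrand_eq, ← mul_assoc, ← Finset.prod_mul_distrib]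
  simp only [Pi.pow_apply, weight]
  rw [Finset.prod_mul_distrib, Finset.prod_const, Finset.card_fin, Finset.prod_pow, sqrtDensity,
    mul_pow, mul_assoc]

theorem setIntegral_lueTotalIntegrand {m : ℕ} (μ : ℕ) {s : ℝ} (hs : 0 ≤ s) (T : Set ℕ) :
    ∫ y in {y | ∀ i, 0 < y i} ∩ {y | countBelow (s ^ 2) y ∈ T}, lueTotalIntegrand m μ y =
      m.factorial * 2 ^ m *
        ∫ a in chamber m ∩ {a | countBelow s a ∈ T}, sqrtDensity μ a ^ 2 := by
  set S := {y : Fin m → ℝ | ∀ i, 0 < y i} ∩ {y | countBelow (s ^ 2) y ∈ T}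
  have comp_perm_mem_S (σ : Equiv.Perm (Fin m)) (y) : y ∘ σ ∈ S ↔ y ∈ S := by
    refine and_congr (σ.forall_congr_right (q := fun i => 0 < _)) ?_
    simp only [Set.mem_ofPred_eq, countBelow_comp_equiv]
  have sq_domain : chamber m ∩ {a | a ^ 2 ∈ {y | countBelow (s ^ 2) y ∈ T}} =
      chamber m ∩ {a | countBelow s a ∈ T} :=
    Set.ext fun a => and_congr_right fun ha => by
      simp only [Set.mem_ofPred_eq, countBelow_sq hs fun i => (ha.1 i).le]
  rw [setIntegral_eq_factorial_smul_setIntegral_strictMono comp_perm_mem_S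
    (lueTotalIntegrand_comp_perm μ)
    ((integrableOn_lueTotalIntegrand m μ).mono_set Set.inter_subset_left),
    nsmul_eq_mul, Set.inter_right_comm, mul_assoc,
    ← integral_const_mul (2 ^ m)]
  change _ * ∫ y in chamber m ∩ _, _ = _
  rw [setIntegral_chamber_eq_setIntegral_sq (measurableSet_countBelow (s ^ 2) T), sq_domain]
  congr 1
  exact setIntegral_congr_fun (measurableSet_chamber.inter (measurableSet_countBelow s T))
    fun a ha => prod_two_mul_mul_lueTotalIntegrand_sq μ ha.1.1

end LUE

section Ratio

theorem setIntegral_chamber_sqrtDensity_sq_pos {m : ℕ} (μ : Fin 2) :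
    0 < ∫ a : Fin m → ℝ in chamber m, sqrtDensity μ a ^ 2 := by
  have hgoe := (integral_goeTotalIntegrand_pos (2 * m + μ)).ne'
  rw [integral_goeTotalIntegrand] at hgoe
  exact (integral_nonneg fun a => sq_nonneg _).lt_of_ne' (right_ne_zero_of_mul hgoe)

theorem setIntegral_goeTotalIntegrand_div {m : ℕ} (μ : Fin 2) (s : ℝ) (T : Set ℕ) :
    (∫ x in {x | (countBelow s |x| + 1 - μ) / 2 ∈ T}, goeTotalIntegrand (2 * m + μ) x) /
        ∫ x, goeTotalIntegrand (2 * m + μ) x =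
      (∫ a in chamber m ∩ {a | countBelow s a ∈ T}, sqrtDensity μ a ^ 2) /
        ∫ a in chamber m, sqrtDensity μ a ^ 2 := by
  have hgoe := (integral_goeTotalIntegrand_pos (2 * m + μ)).ne'
  rw [integral_goeTotalIntegrand] at hgoe
  rw [setIntegral_goeTotalIntegrand, integral_goeTotalIntegrand,
    mul_div_mul_left _ _ (left_ne_zero_of_mul hgoe)]

theorem setIntegral_lueTotalIntegrand_univ (m μ : ℕ) :
    ∫ y in {y : Fin m → ℝ | ∀ i, 0 < y i}, lueTotalIntegrand m μ y =
      m.factorial * 2 ^ m * ∫ a in chamber m, sqrtDensity μ a ^ 2 := by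
  simpa using setIntegral_lueTotalIntegrand (m := m) μ le_rfl Set.univ

theorem setIntegral_lueTotalIntegrand_div {m : ℕ} (μ : ℕ) {s : ℝ} (hs : 0 ≤ s) (T : Set ℕ) :
    (∫ y in {y | ∀ i, 0 < y i} ∩ {y | countBelow (s ^ 2) y ∈ T}, lueTotalIntegrand m μ y) /
        ∫ y in {y : Fin m → ℝ | ∀ i, 0 < y i}, lueTotalIntegrand m μ y =
      (∫ a in chamber m ∩ {a | countBelow s a ∈ T}, sqrtDensity μ a ^ 2) /
        ∫ a in chamber m, sqrtDensity μ a ^ 2 := by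
  rw [setIntegral_lueTotalIntegrand μ hs, setIntegral_lueTotalIntegrand_univ,
    mul_div_mul_left _ _ (by positivity)]

theorem integral_goeGapIntegrand_add {n : ℕ} (μ : Fin 2) (s : ℝ) (k : ℕ) :
    ((∫ x, goeGapIntegrand n s (2 * (k : ℤ) + (μ : ℕ) - 1) x) +
        ∫ x, goeGapIntegrand n s (2 * (k : ℤ) + (μ : ℕ)) x) =
      ∫ x in {x | (countBelow s |x| + 1 - μ) / 2 ∈ ({k} : Set ℕ)}, goeTotalIntegrand n x := by
  have measurableSet_eq (j : ℤ) : MeasurableSet {x : Fin n → ℝ | (countBelow s |x| : ℤ) = j} :=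
    measurableSet_countBelow_abs s {c | (c : ℤ) = j}
  have hint := integrable_goeTotalIntegrand n
  simp only [goeGapIntegrand_eq_indicator, integral_indicator (measurableSet_eq _)]
  rw [← setIntegral_union ?_ (measurableSet_eq _) hint.integrableOn hint.integrableOn]
  · congr 2
    ext x
    simp only [Set.mem_union, Set.mem_ofPred_eq, Set.mem_singleton_iff]
    omega
  · refine Set.disjoint_left.mpr fun x (hx : _ = _) (hx' : _ = _) => ?_
    omega

theorem setIntegral_lueGapIntegrand (m μ : ℕ) (c : ℝ) (k : ℕ) :
    ∫ y in {y : Fin m → ℝ | ∀ i, 0 < y i}, lueGapIntegrand m μ c k y =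
      ∫ y in {y | ∀ i, 0 < y i} ∩ {y | countBelow c y ∈ ({k} : Set ℕ)},
        lueTotalIntegrand m μ y := by
  rw [lueGapIntegrand_eq_indicator]
  exact setIntegral_indicator (measurableSet_countBelow c {k})

end Ratio

/-- Gauss case of Theorem 6.1: the gap probabilities of the `n × n` GOE
and the `m × m` LUE with parameter `μ - 1/2` satisfy
`(A_{2k+μ-1} + A_{2k+μ})/Z₁ = B_k/Z₂`; moreover all the integrals involved are finite and
`Z₁, Z₂ > 0`. -/
theorem gauss_gap_probability (μ m n : ℕ) (hμ : μ = 0 ∨ μ = 1) (hm : 1 ≤ m)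
    (hn : n = 2 * m + μ) (k : ℕ) (s : ℝ) (hs : 0 < s) :
    (∀ j : ℤ, Integrable (goeGapIntegrand n s j)) ∧
    Integrable (goeTotalIntegrand n) ∧
    IntegrableOn (lueGapIntegrand m μ (s ^ 2) k) {y : Fin m → ℝ | ∀ i, 0 < y i} ∧
    IntegrableOn (lueTotalIntegrand m μ) {y : Fin m → ℝ | ∀ i, 0 < y i} ∧
    (0 < ∫ x, goeTotalIntegrand n x) ∧
    (0 < ∫ y in {y : Fin m → ℝ | ∀ i, 0 < y i}, lueTotalIntegrand m μ y) ∧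
    ((∫ x, goeGapIntegrand n s (2 * (k : ℤ) + (μ : ℤ) - 1) x) +
        ∫ x, goeGapIntegrand n s (2 * (k : ℤ) + (μ : ℤ)) x) /
      (∫ x, goeTotalIntegrand n x) =
    (∫ y in {y : Fin m → ℝ | ∀ i, 0 < y i}, lueGapIntegrand m μ (s ^ 2) k y) /
      (∫ y in {y : Fin m → ℝ | ∀ i, 0 < y i}, lueTotalIntegrand m μ y) := by
  obtain ⟨ν, rfl⟩ : ∃ ν : Fin 2, (ν : ℕ) = μ := ⟨⟨μ, by omega⟩, rfl⟩
  subst hn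
  refine ⟨integrable_goeGapIntegrand _ s, integrable_goeTotalIntegrand _,
    integrableOn_lueGapIntegrand m ν (s ^ 2) k, integrableOn_lueTotalIntegrand m ν,
    integral_goeTotalIntegrand_pos _, ?_, ?_⟩
  · rw [setIntegral_lueTotalIntegrand_univ]
    exact mul_pos (by positivity) (setIntegral_chamber_sqrtDensity_sq_pos ν)
  · rw [integral_goeGapIntegrand_add, setIntegral_lueGapIntegrand,
      setIntegral_goeTotalIntegrand_div, setIntegral_lueTotalIntegrand_div ν hs.le]
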